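/- arXiv:2312.08930 — 3 statements merged into one kernel-verified Lean document; each statement's English description precedes it below -/
import Mathlib

section
/- Let n ≥ 3 be odd and let Q_{4n} be the generalized quaternion (dicyclic) group of order 4n. Then the characteristic polynomial of the adjacency matrix of the order super commuting graph Δ^o(Q_{4n}) is χ(A(Δ^o(Q_{4n})), x) = (x + 1)^{4n−3} · [x³ − (4n − 3)x² + (4n² − 12n + 3)x + (12n² − 16n + 1)]. Moreover, Δ^o(Q_{4n}) has eigenvalue −1 with multiplicity 4n − 3, and the three remaining simple eigenvalues α < β < γ satisfy −3 < α < −2, 2n − 3 < β < 2n − 2, and 2n + 1 < γ < 2n + 2 if 3 ≤ n ≤ 13 while 2n + 2 < γ < 2n + 3 if n ≥ 15. -/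
/-!
For odd `n` the cyclic subgroup `⟨a⟩` of order `2n` has no element of order `4`, while every
`xa j` has order `4`; and `a i` commutes with `xa j` iff `2i = 0`, i.e. iff `a i` is one of the two
central elements. Hence `Δ^o(Q_{4n})` is the join of `K_2` (the centre) with the disjoint union of
`K_{2n-2}` (the rest of `⟨a⟩`) and `K_{2n}` (the elements `xa j`); see `orderSuper_adj_iff`.

So `A + I` is constant on the blocks of a partition into parts of sizes `2, 2n-2, 2n`, with block
pattern the `3 × 3` matrix `joinPattern`. The identity `χ(PQ) = X^k χ(QP)` for rectangular matrices
reduces its characteristic polynomial to that of the `3 × 3` quotient matrix (`charpoly_blowup`),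
and shifting by `1` gives the stated cubic.

The eigenvalue bounds come from the intermediate value theorem applied to the cubic `p`:
`p(-3) = -8(2n+1)`, `p(-2) = 4n²-8n-1`, `p(2n-3) = 8(n-1)`, `p(2n-2) = -(2n+1)`,
`p(2n+1) = -8(n-1)`, `p(2n+2) = 27-2n`, `p(2n+3) = 8n+64`. The sign of `27 - 2n` is what separates
`n ≤ 13` from `n ≥ 15`.
-/


open Polynomial

noncomputable section
open scoped Classical

/-- The adjacency matrix (over ℝ) of a finite simple graph. -/
def adjMat {V : Type*} [Fintype V] (Γ : SimpleGraph V) : Matrix V V ℝ :=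
  fun u v => if Γ.Adj u v then 1 else 0

/-- The Laplacian matrix `D − A` of a finite simple graph, where `D` is the diagonal
matrix of vertex degrees. -/
def lapMat {V : Type*} [Fintype V] (Γ : SimpleGraph V) : Matrix V V ℝ :=
  Matrix.diagonal (fun v => ((Finset.univ.filter fun u => Γ.Adj v u).card : ℝ)) - adjMat Γ

/-- The `R`-super graph of `Γ`: two distinct vertices are adjacent iff they are
`R`-equivalent or some members of their respective `R`-classes are adjacent in `Γ`. -/
def superGraph {V : Type*} (Γ : SimpleGraph V) (R : Setoid V) : SimpleGraph V :=
  SimpleGraph.fromRel fun u v =>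
    R.r u v ∨ ∃ u' v', R.r u u' ∧ R.r v v' ∧ Γ.Adj u' v'

/-- The `R`-compressed graph of `Γ`, on the set of `R`-classes: two distinct classes are
adjacent iff some vertex of one is adjacent in `Γ` to some vertex of the other. -/
def compressedGraph {V : Type*} (Γ : SimpleGraph V) (R : Setoid V) :
    SimpleGraph (Quotient R) :=
  SimpleGraph.fromRel fun c d => ∃ x y, Quotient.mk R x = c ∧ Quotient.mk R y = d ∧ Γ.Adj x y

/-- The generalized join `I[K_{n i}]` of complete graphs along the graph `I`:
the vertex `i` of `I` is replaced by the complete graph on `Fin (n i)`, and all edges are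
put between the `i`-th and `j`-th complete graphs whenever `i` and `j` are adjacent in `I`. -/
def genJoinK {ι : Type*} (I : SimpleGraph ι) (n : ι → ℕ) : SimpleGraph (Σ i, Fin (n i)) :=
  SimpleGraph.fromRel fun a b => a.1 = b.1 ∨ I.Adj a.1 b.1

/-- The star graph `K_{1,k-1}` on `Fin k`, whose central vertex is the one with value `0`. -/
def starGraph (k : ℕ) : SimpleGraph (Fin k) :=
  SimpleGraph.fromRel fun a _b => a.val = 0

/-- The order super commuting graph `Δ^o(G)`: distinct `x, y` are adjacent iff
`o(x) = o(y)` or some distinct commuting `x', y'` satisfy `o(x') = o(x)` and `o(y') = o(y)`. -/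
def orderSuper (G : Type*) [Group G] : SimpleGraph G :=
  SimpleGraph.fromRel fun x y =>
    orderOf x = orderOf y ∨
      ∃ x' y' : G, x' ≠ y' ∧ x' * y' = y' * x' ∧ orderOf x' = orderOf x ∧ orderOf y' = orderOf y

/-- The conjugacy super commuting graph `Δ^c(G)`: distinct `x, y` are adjacent iff
`x` is conjugate to `y` or some distinct commuting `x', y'` are conjugate to `x` and `y`
respectively. -/
def conjSuper (G : Type*) [Group G] : SimpleGraph G :=
  SimpleGraph.fromRel fun x y =>
    IsConj x y ∨ ∃ x' y' : G, x' ≠ y' ∧ x' * y' = y' * x' ∧ IsConj x x' ∧ IsConj y y'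

open QuaternionGroup

/-! ### The structure of the graph -/

/-- The class of an element of `Q_{4n}` (`n` odd) in the partition underlying `Δ^o(Q_{4n})`:
`0` for the central elements, `1` for the other powers of `a`, and `2` for the elements `xa j`. -/
def blockClass {n : ℕ} : QuaternionGroup n → Fin 3
  | a i => if i + i = 0 then 0 else 1
  | xa _ => 2

/-- The pattern of `A + I` on the three classes: only classes `1` and `2` are not joined. -/
def joinPattern : Matrix (Fin 3) (Fin 3) ℝ :=
  !![1, 1, 1; 1, 1, 0; 1, 0, 1]

lemma orderOf_a_ne_four {n : ℕ} (hodd : Odd n) (i : ZMod (2 * n)) :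
    orderOf (a i : QuaternionGroup n) ≠ 4 := by
  intro h
  have h1 : (a i : QuaternionGroup n) ^ (2 * n) = 1 := by
    obtain ⟨k, rfl⟩ := ZMod.intCast_surjective i
    have h2 : (a (k : ZMod (2 * n)) : QuaternionGroup n) = (a 1) ^ k := by
      cases k with
      | ofNat m => simp
      | negSucc m =>
        rw [zpow_negSucc, a_one_pow, eq_inv_iff_mul_eq_one, a_mul_a, ← a_zero]
        congr 1
        push_cast
        ring
    rw [h2, ← zpow_natCast, zpow_comm, zpow_natCast, a_one_pow_n, one_zpow]
  have h3 := orderOf_dvd_of_pow_eq_one h1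
  rw [h] at h3
  obtain ⟨k, rfl⟩ := hodd
  omega

lemma orderOf_a_dvd_two_iff {n : ℕ} (i : ZMod (2 * n)) :
    orderOf (a i : QuaternionGroup n) ∣ 2 ↔ i + i = 0 := by
  rw [orderOf_dvd_iff_pow_eq_one, sq, a_mul_a, one_def]
  exact ⟨fun h => a.inj h, fun h => by rw [h]⟩

lemma a_commute_xa_iff {n : ℕ} (i j : ZMod (2 * n)) :
    (a i : QuaternionGroup n) * xa j = xa j * a i ↔ i + i = 0 := by
  rw [a_mul_xa, xa_mul_a, xa.injEq]
  constructor
  · intro h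
    linear_combination -h
  · intro h
    linear_combination -h

/-- Orders decide whether a power of `a` is central, so no choice of `x', y'` of the right
orders can make a non-central `a i` adjacent to some `xa j`. -/
lemma orderSuper_adj_a_xa {n : ℕ} [NeZero n] (hodd : Odd n) (i j : ZMod (2 * n)) :
    (orderSuper (QuaternionGroup n)).Adj (a i) (xa j) ↔ i + i = 0 := by
  have key : ∀ x' y' : QuaternionGroup n, x' * y' = y' * x' → orderOf x' = orderOf (a i) →
      orderOf y' = 4 → i + i = 0 := by
    rintro (l | l) (k | k) hc hx hy
    · exact absurd hy (orderOf_a_ne_four hodd k)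
    · rw [← orderOf_a_dvd_two_iff, ← hx, orderOf_a_dvd_two_iff]
      exact (a_commute_xa_iff l k).1 hc
    · exact absurd hy (orderOf_a_ne_four hodd k)
    · rw [orderOf_xa] at hx
      exact absurd hx.symm (orderOf_a_ne_four hodd i)
  simp only [orderSuper, SimpleGraph.fromRel_adj, orderOf_xa]
  constructor
  · rintro ⟨-, (h | ⟨x', y', -, hc, hx, hy⟩) | (h | ⟨x', y', -, hc, hx, hy⟩)⟩
    · exact absurd h (orderOf_a_ne_four hodd i)
    · exact key x' y' hc hx hy
    · exact absurd h.symm (orderOf_a_ne_four hodd i)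
    · exact key y' x' hc.symm hy hx
  · intro h
    exact ⟨by simp, Or.inl (Or.inr ⟨a i, xa j, by simp, (a_commute_xa_iff i j).2 h, rfl,
      orderOf_xa j⟩)⟩

lemma orderSuper_adj_iff {n : ℕ} [NeZero n] (hodd : Odd n) (x y : QuaternionGroup n) :
    (orderSuper (QuaternionGroup n)).Adj x y ↔
      x ≠ y ∧ joinPattern (blockClass x) (blockClass y) = 1 := by
  rcases x with i | i <;> rcases y with j | j
  · have h1 : (orderSuper (QuaternionGroup n)).Adj (a i) (a j) ↔
        (a i : QuaternionGroup n) ≠ a j := by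
      simp only [orderSuper, SimpleGraph.fromRel_adj]
      refine ⟨fun h => h.1, fun h => ⟨h, Or.inl (Or.inr ⟨a i, a j, h, ?_, rfl, rfl⟩)⟩⟩
      rw [a_mul_a, a_mul_a, add_comm]
    rw [h1]
    simp only [blockClass]
    split_ifs <;> simp [joinPattern]
  · rw [orderSuper_adj_a_xa hodd]
    simp only [blockClass]
    split_ifs with h <;> simp [joinPattern, h]
  · rw [SimpleGraph.adj_comm, orderSuper_adj_a_xa hodd]
    simp only [blockClass]
    split_ifs with h <;> simp [joinPattern, h]
  · simp [orderSuper, blockClass, joinPattern]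

/-! ### Sizes of the classes -/

lemma card_blockClass_two {n : ℕ} [NeZero n] :
    (Finset.univ.filter fun x : QuaternionGroup n => blockClass x = 2).card = 2 * n := by
  have h : (Finset.univ.filter fun x : QuaternionGroup n => blockClass x = 2) =
      Finset.univ.image (xa : ZMod (2 * n) → QuaternionGroup n) := by
    ext x
    rw [Finset.mem_filter]
    rcases x with i | i
    · by_cases h : i + i = 0 <;> simp [blockClass, h]
    · simp [blockClass]
  rw [h, Finset.card_image_of_injective _ (fun _ _ h => xa.inj h), Finset.card_univ, ZMod.card]

lemma add_self_eq_zero_iff_zmod {n : ℕ} [NeZero n] (i : ZMod (2 * n)) :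
    i + i = 0 ↔ i = 0 ∨ i = (n : ZMod (2 * n)) := by
  have hpos := NeZero.pos n
  constructor
  · intro h
    obtain ⟨k, hk, rfl⟩ : ∃ k : ℕ, k < 2 * n ∧ (k : ZMod (2 * n)) = i :=
      ⟨i.val, ZMod.val_lt i, ZMod.natCast_zmod_val i⟩
    rw [← Nat.cast_add, ZMod.natCast_eq_zero_iff] at h
    obtain ⟨c, hc⟩ := h
    have hc2 : c < 2 := by
      by_contra hcon
      have : 2 * n * 2 ≤ 2 * n * c := Nat.mul_le_mul_left _ (by omega)
      omega
    interval_cases c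
    · left
      have : k = 0 := by omega
      simp [this]
    · right
      have : k = n := by omega
      rw [this]
  · rintro (rfl | rfl)
    · simp
    · rw [← Nat.cast_add, ← two_mul, ZMod.natCast_self]

lemma card_blockClass_zero {n : ℕ} [NeZero n] :
    (Finset.univ.filter fun x : QuaternionGroup n => blockClass x = 0).card = 2 := by
  have hpos := NeZero.pos n
  have h : (Finset.univ.filter fun x : QuaternionGroup n => blockClass x = 0) =
      {a 0, a (n : ZMod (2 * n))} := by
    ext x
    rw [Finset.mem_filter]
    rcases x with i | i
    · simp only [Finset.mem_univ, true_and, Finset.mem_insert,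
        Finset.mem_singleton, a.injEq, ← add_self_eq_zero_iff_zmod]
      by_cases h : i + i = 0 <;> simp [blockClass, h]
    · simp [blockClass, -a_zero]
  rw [h, Finset.card_pair]
  intro h0
  have h1 : ((n : ℕ) : ZMod (2 * n)) = 0 := (a.inj h0).symm
  rw [ZMod.natCast_eq_zero_iff] at h1
  have := Nat.le_of_dvd hpos h1
  omega

lemma card_blockClass_one {n : ℕ} [NeZero n] :
    (Finset.univ.filter fun x : QuaternionGroup n => blockClass x = 1).card + 2 = 2 * n := by
  have h := Finset.card_eq_sum_card_fiberwise (s := (Finset.univ : Finset (QuaternionGroup n)))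
    (t := Finset.univ) (f := blockClass) (fun _ _ => Finset.mem_coe.2 (Finset.mem_univ _))
  rw [Finset.card_univ, QuaternionGroup.card, Fin.sum_univ_three, card_blockClass_zero,
    card_blockClass_two] at h
  omega

/-! ### The characteristic polynomial -/

/-- A matrix that is constant on the blocks of a partition has, up to a power of `X`, the
characteristic polynomial of its quotient matrix. -/
lemma charpoly_blowup {V : Type*} [Fintype V] [DecidableEq V] {k : ℕ} (c : V → Fin k)
    (M : Matrix (Fin k) (Fin k) ℝ) (hV : k ≤ Fintype.card V) :
    (M.submatrix c c).charpoly = X ^ (Fintype.card V - k) *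
      (Matrix.of fun i j => M i j * ((Finset.univ.filter fun v => c v = j).card : ℝ)).charpoly := by
  have h1 : M.submatrix c c =
      (Matrix.of fun (v : V) (i : Fin k) => if c v = i then (1 : ℝ) else 0) *
        M.submatrix id c := by
    ext u v
    simp [Matrix.mul_apply]
  rw [h1, Matrix.charpoly_mul_comm_of_le _ _ (by simpa using hV), Fintype.card_fin]
  congr 2
  ext i j
  rw [Matrix.mul_apply]
  simp only [Matrix.submatrix_apply, id, Matrix.of_apply, mul_ite, mul_one, mul_zero]
  rw [← Finset.sum_filter, Finset.sum_congr rfl (g := fun _ => M i j), Finset.sum_const,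
    nsmul_eq_mul, mul_comm]
  intro v hv
  rw [(Finset.mem_filter.1 hv).2]

lemma charpoly_orderSuper {n : ℕ} [NeZero n] (hodd : Odd n) :
    (adjMat (orderSuper (QuaternionGroup n))).charpoly =
        (X + 1) ^ (4 * n - 3) *
          (X ^ 3 - C (4 * (n : ℝ) - 3) * X ^ 2 + C (4 * (n : ℝ) ^ 2 - 12 * n + 3) * X +
            C (12 * (n : ℝ) ^ 2 - 16 * n + 1)) := by
  have hpos := NeZero.pos n
  have h1 : adjMat (orderSuper (QuaternionGroup n)) =
      joinPattern.submatrix blockClass blockClass - Matrix.scalar _ 1 := by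
    ext x y
    have h01 : ∀ i j, joinPattern i j = 0 ∨ joinPattern i j = 1 := by
      intro i j
      fin_cases i <;> fin_cases j <;> simp [joinPattern]
    have hd : ∀ i, joinPattern i i = 1 := by
      intro i
      fin_cases i <;> simp [joinPattern]
    simp only [adjMat, orderSuper_adj_iff hodd, Matrix.sub_apply, Matrix.submatrix_apply,
      Matrix.scalar_apply, Matrix.diagonal_apply]
    by_cases hxy : x = y
    · subst hxy
      simp [hd]
    · rcases h01 (blockClass x) (blockClass y) with h | h <;> simp [hxy, h]
  have c1 : ((Finset.univ.filter fun x : QuaternionGroup n => blockClass x = 1).card : ℝ) =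
      2 * n - 2 := by
    have := card_blockClass_one (n := n)
    have h2 : (((Finset.univ.filter fun x : QuaternionGroup n => blockClass x = 1).card + 2 : ℕ) : ℝ)
        = ((2 * n : ℕ) : ℝ) := by rw [this]
    push_cast at h2
    linarith
  rw [h1, Matrix.charpoly_sub_scalar, charpoly_blowup _ _ (by rw [QuaternionGroup.card]; omega),
    QuaternionGroup.card, Matrix.charpoly, Matrix.det_fin_three]
  simp only [Matrix.charmatrix_apply, Matrix.of_apply, card_blockClass_zero, card_blockClass_two,
    c1]
  simp [joinPattern]
  left
  simp only [map_ofNat C]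
  ring

/-! ### The three remaining eigenvalues -/

/-- Three distinct roots of a monic cubic determine it. -/
lemma cubic_factor (b c d α β γ : ℝ) (hαβ : α < β) (hβγ : β < γ)
    (h1 : α ^ 3 - b * α ^ 2 + c * α + d = 0) (h2 : β ^ 3 - b * β ^ 2 + c * β + d = 0)
    (h3 : γ ^ 3 - b * γ ^ 2 + c * γ + d = 0) :
    (X ^ 3 - C b * X ^ 2 + C c * X + C d : ℝ[X]) = (X - C α) * (X - C β) * (X - C γ) := by
  -- Divided differences of the cubic along the roots vanish.
  have e1 : α ^ 2 + α * β + β ^ 2 - b * (α + β) + c = 0 :=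
    mul_left_cancel₀ (sub_ne_zero.2 hαβ.ne) (by linear_combination h1 - h2)
  have e2 : β ^ 2 + β * γ + γ ^ 2 - b * (β + γ) + c = 0 :=
    mul_left_cancel₀ (sub_ne_zero.2 hβγ.ne) (by linear_combination h2 - h3)
  have hb : b = α + β + γ :=
    mul_left_cancel₀ (sub_ne_zero.2 (hαβ.trans hβγ).ne) (by linear_combination e2 - e1)
  have hc : c = α * β + β * γ + γ * α := by
    subst hb
    linear_combination e1
  have hd : d = -(α * β * γ) := by
    subst hb hc
    linear_combination h1
  subst hb hc hd
  simp only [map_add, map_mul, map_neg]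
  ring

/-- The cubic factor of the characteristic polynomial, as a real function of `x`. -/
def cubicFactor (n x : ℝ) : ℝ :=
  x ^ 3 - (4 * n - 3) * x ^ 2 + (4 * n ^ 2 - 12 * n + 3) * x + (12 * n ^ 2 - 16 * n + 1)

lemma continuous_cubicFactor (n : ℝ) : Continuous (cubicFactor n) := by
  unfold cubicFactor
  fun_prop

lemma exists_root_up (n l r : ℝ) (hlr : l ≤ r) (hl : cubicFactor n l < 0)
    (hr : 0 < cubicFactor n r) : ∃ x, l < x ∧ x < r ∧ cubicFactor n x = 0 := by
  obtain ⟨x, hx, h⟩ := intermediate_value_Ioo hlr (continuous_cubicFactor n).continuousOn ⟨hl, hr⟩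
  exact ⟨x, hx.1, hx.2, h⟩

lemma exists_root_down (n l r : ℝ) (hlr : l ≤ r) (hl : 0 < cubicFactor n l)
    (hr : cubicFactor n r < 0) : ∃ x, l < x ∧ x < r ∧ cubicFactor n x = 0 := by
  obtain ⟨x, hx, h⟩ := intermediate_value_Ioo' hlr (continuous_cubicFactor n).continuousOn ⟨hr, hl⟩
  exact ⟨x, hx.1, hx.2, h⟩

lemma exists_roots (n : ℕ) (hn : 3 ≤ n) (hodd : Odd n) :
    ∃ α β γ : ℝ, α < β ∧ β < γ ∧
        (-3 < α ∧ α < -2) ∧ (2 * (n : ℝ) - 3 < β ∧ β < 2 * (n : ℝ) - 2) ∧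
        (n ≤ 13 → 2 * (n : ℝ) + 1 < γ ∧ γ < 2 * (n : ℝ) + 2) ∧
        (15 ≤ n → 2 * (n : ℝ) + 2 < γ ∧ γ < 2 * (n : ℝ) + 3) ∧
        cubicFactor n α = 0 ∧ cubicFactor n β = 0 ∧ cubicFactor n γ = 0 := by
  have hn' : (3 : ℝ) ≤ n := by exact_mod_cast hn
  obtain ⟨α, hα1, hα2, hα⟩ := exists_root_up n (-3) (-2) (by norm_num)
    (by unfold cubicFactor; nlinarith) (by unfold cubicFactor; nlinarith)
  have v1 : cubicFactor n (2 * n - 3) = 8 * (n - 1) := by unfold cubicFactor; ring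
  have v2 : cubicFactor n (2 * n - 2) = -(2 * n + 1) := by unfold cubicFactor; ring
  have v3 : cubicFactor n (2 * n + 1) = -8 * (n - 1) := by unfold cubicFactor; ring
  have v4 : cubicFactor n (2 * n + 2) = 27 - 2 * n := by unfold cubicFactor; ring
  have v5 : cubicFactor n (2 * n + 3) = 8 * n + 64 := by unfold cubicFactor; ring
  obtain ⟨β, hβ1, hβ2, hβ⟩ := exists_root_down n (2 * n - 3) (2 * n - 2) (by linarith)
    (by rw [v1]; linarith) (by rw [v2]; linarith)
  by_cases h : n ≤ 13
  · have h' : (n : ℝ) ≤ 13 := by exact_mod_cast h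
    obtain ⟨γ, hγ1, hγ2, hγ⟩ := exists_root_up n (2 * n + 1) (2 * n + 2) (by linarith)
      (by rw [v3]; linarith) (by rw [v4]; linarith)
    exact ⟨α, β, γ, by linarith, by linarith, ⟨hα1, hα2⟩, ⟨hβ1, hβ2⟩, fun _ => ⟨hγ1, hγ2⟩,
      fun h15 => absurd h (by omega), hα, hβ, hγ⟩
  · have h15 : 15 ≤ n := by
      obtain ⟨k, rfl⟩ := hodd
      omega
    have h' : (15 : ℝ) ≤ n := by exact_mod_cast h15
    obtain ⟨γ, hγ1, hγ2, hγ⟩ := exists_root_up n (2 * n + 2) (2 * n + 3) (by linarith)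
      (by rw [v4]; linarith) (by rw [v5]; linarith)
    exact ⟨α, β, γ, by linarith, by linarith, ⟨hα1, hα2⟩, ⟨hβ1, hβ2⟩, fun h13 => absurd h13 h,
      fun _ => ⟨hγ1, hγ2⟩, hα, hβ, hγ⟩

/-- Adjacency spectrum of the order super commuting graph of the generalized quaternion
group `Q_{4n}` for odd `n ≥ 3`: the characteristic polynomial is
`(x+1)^{4n−3} (x³ − (4n−3)x² + (4n²−12n+3)x + (12n²−16n+1))`; moreover `−1` is an
eigenvalue of multiplicity `4n−3` and the three remaining simple eigenvalues `α < β < γ`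
satisfy `−3 < α < −2`, `2n−3 < β < 2n−2`, and `2n+1 < γ < 2n+2` if `3 ≤ n ≤ 13` while
`2n+2 < γ < 2n+3` if `n ≥ 15`. -/
theorem stmt_9 (n : ℕ) [NeZero n] (hn : 3 ≤ n) (hodd : Odd n) :
    (adjMat (orderSuper (QuaternionGroup n))).charpoly =
        (X + 1) ^ (4 * n - 3) *
          (X ^ 3 - C (4 * (n : ℝ) - 3) * X ^ 2 + C (4 * (n : ℝ) ^ 2 - 12 * n + 3) * X +
            C (12 * (n : ℝ) ^ 2 - 16 * n + 1)) ∧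
      ∃ α β γ : ℝ, α < β ∧ β < γ ∧
        (-3 < α ∧ α < -2) ∧ (2 * (n : ℝ) - 3 < β ∧ β < 2 * (n : ℝ) - 2) ∧
        (n ≤ 13 → 2 * (n : ℝ) + 1 < γ ∧ γ < 2 * (n : ℝ) + 2) ∧
        (15 ≤ n → 2 * (n : ℝ) + 2 < γ ∧ γ < 2 * (n : ℝ) + 3) ∧
        (adjMat (orderSuper (QuaternionGroup n))).charpoly =
          (X + 1) ^ (4 * n - 3) * ((X - C α) * (X - C β) * (X - C γ)) := by
  refine ⟨charpoly_orderSuper hodd, ?_⟩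
  obtain ⟨α, β, γ, hαβ, hβγ, hα, hβ, hγ1, hγ2, rα, rβ, rγ⟩ := exists_roots n hn hodd
  refine ⟨α, β, γ, hαβ, hβγ, hα, hβ, hγ1, hγ2, ?_⟩
  rw [charpoly_orderSuper hodd, cubic_factor _ _ _ α β γ hαβ hβγ rα rβ rγ]
end
end

section
/- Let p and q be distinct primes with q dividing p − 1, and let G be a nonabelian group of order pq (i.e., G ≅ ℤ_p ⋊ ℤ_q, the nontrivial semidirect product). Then the characteristic polynomial of the adjacency matrix of the order super commuting graph Δ^o(G) is χ(A(Δ^o(G)), x) = (x + 1)^{pq−3} · [x³ − (pq − 3)x² + (p²q − 3pq − p² + p + 3)x + (2p²q − 3pq − 2p² + 2p + 1)]. Moreover, Δ^o(G) has eigenvalue −1 with multiplicity pq − 3, and the three remaining simple eigenvalues α < β < γ satisfy −2 < α < −1, p − 2 < β < p − 1, and pq − p < γ < pq − p + 1. -/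
/-!
Elements of a nonabelian group `G` of order `pq` have order `1`, `p` or `q`, because an element of
order `pq` would make `G` cyclic. For the same reason elements of orders `p` and `q` never commute.
So two distinct vertices of the order super commuting graph are nonadjacent exactly when one has
order `p` and the other order `q`. Since `q < p`, a subgroup of order `p` is normal and contains
all elements of order `p` (`card_orderOf_eq`), so the three order classes have `1`, `p - 1` and
`pq - p` elements.

Hence `A + 1` is the blow-up of a `3 × 3` pattern along the order classes and factors as `U * W`
with `U` of size `pq × 3`. Comparing the characteristic polynomials of `U * W` and `W * U`
reduces the computation to a `3 × 3` determinant (`charpoly_orderSuper`). The three remaining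
eigenvalues are located by sign changes of the cubic factor (`exists_roots`).
-/

open Polynomial

noncomputable section
open scoped Classical

/-- The class of an element of a group of order `pq`, recorded by its order:
`0` for the identity, `1` for order `p`, `2` for every other order. -/
def orderClass (p : ℕ) {G : Type*} [Group G] (g : G) : Fin 3 :=
  if orderOf g = 1 then 0 else if orderOf g = p then 1 else 2

/-- The adjacency pattern between the three order classes, with loops: the identity class is
joined to everything, whereas the classes of orders `p` and `q` are not joined to each other. -/
def classPattern : Matrix (Fin 3) (Fin 3) ℝ := !![1, 1, 1; 1, 1, 0; 1, 0, 1]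

section GroupTheory

variable {p q : ℕ} {G : Type*} [Group G]

lemma orderClass_eq_zero (g : G) : orderClass p g = 0 ↔ orderOf g = 1 := by
  unfold orderClass; split_ifs <;> simp_all

lemma orderClass_eq_one (hp : p.Prime) (g : G) : orderClass p g = 1 ↔ orderOf g = p := by
  have := hp.one_lt
  unfold orderClass; split_ifs <;> simp_all
  omega

variable [Fintype G]

/-- A nonabelian group of order `pq` has no element of order `pq`, since it is not cyclic. -/
lemma orderOf_cases (hp : p.Prime) (hq : q.Prime) (hcard : Fintype.card G = p * q)
    (hnab : ∃ x y : G, x * y ≠ y * x) (g : G) :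
    orderOf g = 1 ∨ orderOf g = p ∨ orderOf g = q := by
  have hd : orderOf g ∣ p * q := hcard ▸ orderOf_dvd_card
  obtain ⟨a, b, ha, hb, hab⟩ := (Nat.dvd_mul).1 hd
  rcases (Nat.dvd_prime hp).1 ha with rfl | rfl <;> rcases (Nat.dvd_prime hq).1 hb with rfl | rfl
  · simp_all
  · simp_all
  · simp_all
  · exfalso
    have : IsCyclic G := isCyclic_of_orderOf_eq_card g (by
      rw [Nat.card_eq_fintype_card, hcard, hab])
    obtain ⟨x, y, hxy⟩ := hnab
    exact hxy (IsCyclic.commGroup.mul_comm x y)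

lemma not_commute_of_orderOf (hp : p.Prime) (hq : q.Prime) (hpq : p ≠ q)
    (hcard : Fintype.card G = p * q) (hnab : ∃ x y : G, x * y ≠ y * x) {x y : G}
    (hx : orderOf x = p) (hy : orderOf y = q) : x * y ≠ y * x := by
  intro h
  have hc : orderOf (x * y) = p * q := by
    rw [Commute.orderOf_mul_eq_mul_orderOf_of_coprime h, hx, hy]
    rw [hx, hy]
    exact (Nat.coprime_primes hp hq).2 hpq
  have h1 := hp.two_le
  have h2 := hq.two_le
  rcases orderOf_cases hp hq hcard hnab (x * y) with h' | h' | h' <;> rw [hc] at h' <;> nlinarith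

/-- The subgroup generated by an element of order `p` has index `q`, the least prime factor of
`pq`, hence is normal; so it contains every element of order `p`. -/
lemma card_orderOf_eq (hp : p.Prime) (hq : q.Prime) (hlt : q < p)
    (hcard : Fintype.card G = p * q) :
    (Finset.univ.filter fun g : G => orderOf g = p).card = p - 1 := by
  have := Fact.mk hp
  obtain ⟨x, hx⟩ := exists_prime_orderOf_dvd_card (G := G) p (hcard ▸ dvd_mul_right p q)
  have hH : Nat.card (Subgroup.zpowers x) = p := by rw [Nat.card_zpowers, hx]
  have hidx : (Subgroup.zpowers x).index = q := by
    have := (Subgroup.zpowers x).card_mul_index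
    rw [hH, Nat.card_eq_fintype_card, hcard] at this
    exact Nat.eq_of_mul_eq_mul_left hp.pos this
  have hmin : (Nat.card G).minFac = q := by
    rw [Nat.card_eq_fintype_card, hcard]
    refine le_antisymm (Nat.minFac_le_of_dvd hq.two_le (dvd_mul_left q p)) ?_
    have hmp : (p * q).minFac.Prime := Nat.minFac_prime (by
      have := hp.two_le; have := hq.two_le; nlinarith)
    rcases (hmp.dvd_mul).1 (Nat.minFac_dvd (p * q)) with h | h
    · rw [(Nat.prime_dvd_prime_iff_eq hmp hp).1 h]; exact hlt.le
    · rw [(Nat.prime_dvd_prime_iff_eq hmp hq).1 h]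
  have : (Subgroup.zpowers x).Normal :=
    Subgroup.normal_of_index_eq_minFac_card (hidx.trans hmin.symm)
  have hmem : ∀ g : G, orderOf g = p → g ∈ Subgroup.zpowers x := by
    intro g hg
    rw [← QuotientGroup.eq_one_iff, ← orderOf_eq_one_iff]
    have h1 : orderOf (g : G ⧸ Subgroup.zpowers x) ∣ p := by
      apply orderOf_dvd_of_pow_eq_one
      rw [← QuotientGroup.mk_pow, ← hg, pow_orderOf_eq_one]; rfl
    have h2 : orderOf (g : G ⧸ Subgroup.zpowers x) ∣ q := by
      have := orderOf_dvd_natCard (g : G ⧸ Subgroup.zpowers x)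
      rwa [← Subgroup.index_eq_card, hidx] at this
    exact Nat.eq_one_of_dvd_coprimes ((Nat.coprime_primes hp hq).2 hlt.ne') h1 h2
  have hset : (Finset.univ.filter fun g : G => orderOf g = p) =
      (Finset.univ.filter fun g : G => g ∈ Subgroup.zpowers x).erase 1 := by
    ext g
    simp only [Finset.mem_filter, Finset.mem_univ, true_and, Finset.mem_erase]
    constructor
    · intro hg
      refine ⟨?_, hmem g hg⟩
      rintro rfl
      rw [orderOf_one] at hg
      exact hp.one_lt.ne hg
    · rintro ⟨h1, h2⟩
      have hd : orderOf g ∣ p := hH ▸ Subgroup.orderOf_dvd_natCard _ h2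
      rcases (Nat.dvd_prime hp).1 hd with h | h
      · exact absurd (orderOf_eq_one_iff.1 h) h1
      · exact h
  rw [hset, Finset.card_erase_of_mem (by simp)]
  congr 1
  rw [← Fintype.card_subtype, ← Nat.card_eq_fintype_card]
  exact hH

lemma card_orderClass (hp : p.Prime) (hq : q.Prime) (hlt : q < p)
    (hcard : Fintype.card G = p * q) (i : Fin 3) :
    ((Finset.univ.filter fun g : G => orderClass p g = i).card : ℝ) =
      ![1, (p : ℝ) - 1, p * q - p] i := by
  have h0 : ((Finset.univ.filter fun g : G => orderClass p g = 0).card : ℝ) = 1 := by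
    simp_rw [orderClass_eq_zero, orderOf_eq_one_iff]
    rw [Nat.cast_eq_one, Finset.card_eq_one]
    exact ⟨1, by ext; simp⟩
  have h1 : ((Finset.univ.filter fun g : G => orderClass p g = 1).card : ℝ) = p - 1 := by
    simp_rw [orderClass_eq_one hp, card_orderOf_eq hp hq hlt hcard]
    rw [Nat.cast_sub hp.one_le, Nat.cast_one]
  have hsum := Finset.card_eq_sum_card_fiberwise (s := (Finset.univ : Finset G))
    (t := (Finset.univ : Finset (Fin 3))) (f := orderClass p)
    (fun _ _ => Finset.mem_coe.2 (Finset.mem_univ _))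
  rw [Finset.card_univ, hcard, Fin.sum_univ_three] at hsum
  have hsum' := congrArg (Nat.cast : ℕ → ℝ) hsum
  push_cast at hsum'
  fin_cases i
  · exact h0
  · exact h1
  · simp only [Fin.reduceFinMk, Matrix.cons_val]
    linarith

/-- Adding loops to the order super commuting graph gives exactly the blow-up of
`classPattern` along the order classes. -/
lemma adjMat_add_one_apply (hp : p.Prime) (hq : q.Prime) (hpq : p ≠ q)
    (hcard : Fintype.card G = p * q) (hnab : ∃ x y : G, x * y ≠ y * x) (g h : G) :
    (adjMat (orderSuper G) + 1) g h = classPattern (orderClass p g) (orderClass p h) := by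
  have hp1 := hp.one_lt
  have hq1 := hq.one_lt
  have key : ∀ x y : G, orderOf x = p → orderOf y = q → ¬ (orderSuper G).Adj x y := by
    intro x y hx hy hadj
    simp only [orderSuper, SimpleGraph.fromRel_adj] at hadj
    obtain ⟨-, (h | ⟨x', y', -, hc, hx', hy'⟩) | (h | ⟨x', y', -, hc, hx', hy'⟩)⟩ := hadj
    · exact hpq (by rw [← hx, ← hy, h])
    · exact not_commute_of_orderOf hp hq hpq hcard hnab (hx'.trans hx) (hy'.trans hy) hc
    · exact hpq (by rw [← hx, ← hy, h])
    · exact not_commute_of_orderOf hp hq hpq hcard hnab (hy'.trans hx) (hx'.trans hy) hc.symm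
  have same : ∀ x y : G, x ≠ y → orderOf x = orderOf y → (orderSuper G).Adj x y := by
    intro x y hne h
    rw [orderSuper, SimpleGraph.fromRel_adj]
    exact ⟨hne, Or.inl (Or.inl h)⟩
  have one : ∀ x y : G, x ≠ y → orderOf x = 1 → (orderSuper G).Adj x y := by
    intro x y hne h
    rw [orderSuper, SimpleGraph.fromRel_adj]
    refine ⟨hne, Or.inl (Or.inr ⟨x, y, hne, ?_, rfl, rfl⟩)⟩
    rw [orderOf_eq_one_iff.1 h]; simp
  rw [Matrix.add_apply, Matrix.one_apply, adjMat]
  by_cases hgh : g = h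
  · subst hgh
    generalize orderClass p g = i
    fin_cases i <;> simp [classPattern]
  rw [if_neg hgh, add_zero]
  rcases orderOf_cases hp hq hcard hnab g with hg | hg | hg <;>
  rcases orderOf_cases hp hq hcard hnab h with hh | hh | hh
  · rw [if_pos (one g h hgh hg)]
    simp [classPattern, orderClass, hg, hh]
  · rw [if_pos (one g h hgh hg)]
    simp [classPattern, orderClass, hg, hh, hp1.ne']
  · rw [if_pos (one g h hgh hg)]
    simp [classPattern, orderClass, hg, hh, hq1.ne', hpq.symm]
  · rw [if_pos (one h g (Ne.symm hgh) hh).symm]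
    simp [classPattern, orderClass, hg, hh, hp1.ne']
  · rw [if_pos (same g h hgh (hg.trans hh.symm))]
    simp [classPattern, orderClass, hg, hh, hp1.ne']
  · rw [if_neg (key g h hg hh)]
    simp [classPattern, orderClass, hg, hh, hp1.ne', hq1.ne', hpq.symm]
  · rw [if_pos (one h g (Ne.symm hgh) hh).symm]
    simp [classPattern, orderClass, hg, hh, hq1.ne', hpq.symm]
  · rw [if_neg (fun hadj => key h g hh hg hadj.symm)]
    simp [classPattern, orderClass, hg, hh, hp1.ne', hq1.ne', hpq.symm]
  · rw [if_pos (same g h hgh (hg.trans hh.symm))]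
    simp [classPattern, orderClass, hg, hh, hq1.ne', hpq.symm]

/-- In the variable `X + 1`, the cubic factor is `y³ - pq y² + ab y + ab`, where `a = p - 1` and
`b = pq - p` are the sizes of the two nontrivial order classes. -/
lemma charpoly_orderSuper_s10 (hp : p.Prime) (hq : q.Prime) (hlt : q < p)
    (hcard : Fintype.card G = p * q) (hnab : ∃ x y : G, x * y ≠ y * x) :
    (adjMat (orderSuper G)).charpoly =
        (X + 1) ^ (p * q - 3) *
          (X ^ 3 - C ((p : ℝ) * q - 3) * X ^ 2 +
            C ((p : ℝ) ^ 2 * q - 3 * p * q - (p : ℝ) ^ 2 + p + 3) * X +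
            C (2 * (p : ℝ) ^ 2 * q - 3 * p * q - 2 * (p : ℝ) ^ 2 + 2 * p + 1)) := by
  -- Indicator matrix of the classes, and the pattern spread over the columns.
  let U : Matrix G (Fin 3) ℝ := fun g i => if orderClass p g = i then 1 else 0
  let W : Matrix (Fin 3) G ℝ := fun i g => classPattern i (orderClass p g)
  have hUW : adjMat (orderSuper G) + 1 = U * W := by
    ext g h
    rw [adjMat_add_one_apply hp hq hlt.ne' hcard hnab, Matrix.mul_apply]
    simp [U, W]
  have hWU : W * U = !![1, (p : ℝ) - 1, p * q - p; 1, p - 1, 0; 1, 0, p * q - p] := by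
    have hij : ∀ i j, (W * U) i j = classPattern i j * ![1, (p : ℝ) - 1, p * q - p] j := by
      intro i j
      rw [Matrix.mul_apply, ← card_orderClass hp hq hlt hcard j, Finset.card_filter, Nat.cast_sum,
        Finset.mul_sum]
      refine Finset.sum_congr rfl fun g _ => ?_
      by_cases hg : orderClass p g = j <;> simp [U, W, hg]
    ext i j
    rw [hij]
    fin_cases i <;> fin_cases j <;> simp [classPattern]
  have hle : Fintype.card (Fin 3) ≤ Fintype.card G := by
    rw [Fintype.card_fin, hcard]
    have := hp.two_le
    have := hq.two_le
    nlinarith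
  have hA : adjMat (orderSuper G) = U * W - Matrix.scalar G (1 : ℝ) := by
    rw [← hUW]; simp
  rw [hA, Matrix.charpoly_sub_scalar, Matrix.charpoly_mul_comm_of_le _ _ hle, hWU,
    Fintype.card_fin, hcard, Polynomial.mul_comp, Polynomial.pow_comp, Polynomial.X_comp, C_1]
  congr 1
  rw [Matrix.charpoly, Matrix.det_fin_three]
  simp [map_ofNat]
  ring

end GroupTheory

lemma cubic_eq_of_roots {u v w α β γ : ℝ} (hαβ : α < β) (hβγ : β < γ)
    (hα : α ^ 3 - u * α ^ 2 + v * α + w = 0) (hβ : β ^ 3 - u * β ^ 2 + v * β + w = 0)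
    (hγ : γ ^ 3 - u * γ ^ 2 + v * γ + w = 0) :
    (X ^ 3 - C u * X ^ 2 + C v * X + C w : ℝ[X]) = (X - C α) * (X - C β) * (X - C γ) := by
  -- Divided differences recover the elementary symmetric functions of the roots.
  have h1 : α ^ 2 + α * β + β ^ 2 - u * (α + β) + v = 0 := by
    apply mul_left_cancel₀ (sub_ne_zero.2 hαβ.ne)
    linear_combination hα - hβ
  have h2 : β ^ 2 + β * γ + γ ^ 2 - u * (β + γ) + v = 0 := by
    apply mul_left_cancel₀ (sub_ne_zero.2 hβγ.ne)
    linear_combination hβ - hγ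
  have h3 : u = α + β + γ := by
    apply mul_left_cancel₀ (sub_ne_zero.2 (hαβ.trans hβγ).ne)
    linear_combination h2 - h1
  have h4 : v = α * β + β * γ + γ * α := by
    rw [h3] at h1; linear_combination h1
  have h5 : w = -(α * β * γ) := by
    rw [h3, h4] at hα; linear_combination hα
  rw [h3, h4, h5]
  simp only [map_add, map_mul, map_neg]
  ring

/-- With `f` the cubic factor, `b = pq - p`, one has `f(-2) = -(pq + 1)`, `f(-1) = (p - 1) b`,
`f(p - 2) = (p - 1)(b - p + 1)`, `f(p - 1) = -b`, `f(b) = -(p - 1)` and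
`f(b + 1) = (b + 2)² - (p - 1)(b + 4)`. The sign changes locate the three roots. -/
lemma exists_roots_s10 {p q : ℝ} (hp : 2 ≤ p) (hq : 2 ≤ q) :
    ∃ α β γ : ℝ, α < β ∧ β < γ ∧
      (-2 < α ∧ α < -1) ∧ (p - 2 < β ∧ β < p - 1) ∧ (p * q - p < γ ∧ γ < p * q - p + 1) ∧
      (X ^ 3 - C (p * q - 3) * X ^ 2 + C (p ^ 2 * q - 3 * p * q - p ^ 2 + p + 3) * X +
        C (2 * p ^ 2 * q - 3 * p * q - 2 * p ^ 2 + 2 * p + 1) : ℝ[X]) =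
        (X - C α) * (X - C β) * (X - C γ) := by
  have hb : p ≤ p * q - p := by nlinarith
  obtain ⟨b, hbdef⟩ : ∃ b, b = p * q - p := ⟨_, rfl⟩
  rw [← hbdef] at hb
  let f : ℝ → ℝ := fun x => x ^ 3 - (p * q - 3) * x ^ 2 +
    (p ^ 2 * q - 3 * p * q - p ^ 2 + p + 3) * x +
    (2 * p ^ 2 * q - 3 * p * q - 2 * p ^ 2 + 2 * p + 1)
  have hf : Continuous f := by fun_prop
  have hf' : ∀ x, f x = (x + 1) ^ 3 - (b + p) * (x + 1) ^ 2 + (p - 1) * b * (x + 1)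
      + (p - 1) * b := by
    intro x; simp only [f, hbdef]; ring
  have e1 : f (-2) < 0 := by rw [hf']; nlinarith
  have e2 : 0 < f (-1) := by rw [hf']; nlinarith
  have e3 : 0 < f (p - 2) := by
    have : f (p - 2) = (p - 1) * (b - p + 1) := by rw [hf']; ring
    rw [this]; apply mul_pos <;> linarith
  have e4 : f (p - 1) < 0 := by
    have : f (p - 1) = -b := by rw [hf']; ring
    linarith
  have e5 : f b < 0 := by
    have : f b = -(p - 1) := by rw [hf']; ring
    linarith
  have e6 : 0 < f (b + 1) := by
    have : f (b + 1) = (b + 2) ^ 2 - (p - 1) * (b + 4) := by rw [hf']; ring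
    rw [this]; nlinarith
  obtain ⟨α, hα, hα0⟩ := intermediate_value_Ioo (by norm_num : (-2 : ℝ) ≤ -1)
    hf.continuousOn (show (0 : ℝ) ∈ Set.Ioo _ _ from ⟨e1, e2⟩)
  obtain ⟨β, hβ, hβ0⟩ := intermediate_value_Ioo' (by linarith : p - 2 ≤ p - 1)
    hf.continuousOn (show (0 : ℝ) ∈ Set.Ioo _ _ from ⟨e4, e3⟩)
  obtain ⟨γ, hγ, hγ0⟩ := intermediate_value_Ioo (by linarith : b ≤ b + 1)
    hf.continuousOn (show (0 : ℝ) ∈ Set.Ioo _ _ from ⟨e5, e6⟩)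
  have hαβ : α < β := by linarith [hα.2, hβ.1]
  have hβγ : β < γ := by linarith [hβ.2, hγ.1]
  rw [← hbdef]
  exact ⟨α, β, γ, hαβ, hβγ, hα, hβ, hγ, cubic_eq_of_roots hαβ hβγ hα0 hβ0 hγ0⟩

/-- Adjacency spectrum of the order super commuting graph of a nonabelian group of order
`pq`, where `p, q` are distinct primes with `q ∣ p − 1`: the characteristic polynomial is
`(x+1)^{pq−3} (x³ − (pq−3)x² + (p²q−3pq−p²+p+3)x + (2p²q−3pq−2p²+2p+1))`; moreover `−1`
is an eigenvalue of multiplicity `pq−3` and the three remaining simple eigenvalues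
`α < β < γ` satisfy `−2 < α < −1`, `p−2 < β < p−1` and `pq−p < γ < pq−p+1`. -/
theorem stmt_10 (p q : ℕ) (hp : p.Prime) (hq : q.Prime) (hpq : p ≠ q) (hdvd : q ∣ p - 1)
    (G : Type*) [Group G] [Fintype G] (hcard : Fintype.card G = p * q)
    (hnab : ∃ x y : G, x * y ≠ y * x) :
    (adjMat (orderSuper G)).charpoly =
        (X + 1) ^ (p * q - 3) *
          (X ^ 3 - C ((p : ℝ) * q - 3) * X ^ 2 +
            C ((p : ℝ) ^ 2 * q - 3 * p * q - (p : ℝ) ^ 2 + p + 3) * X +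
            C (2 * (p : ℝ) ^ 2 * q - 3 * p * q - 2 * (p : ℝ) ^ 2 + 2 * p + 1)) ∧
      ∃ α β γ : ℝ, α < β ∧ β < γ ∧
        (-2 < α ∧ α < -1) ∧ ((p : ℝ) - 2 < β ∧ β < (p : ℝ) - 1) ∧
        ((p : ℝ) * q - p < γ ∧ γ < (p : ℝ) * q - p + 1) ∧
        (adjMat (orderSuper G)).charpoly =
          (X + 1) ^ (p * q - 3) * ((X - C α) * (X - C β) * (X - C γ)) := by
  have hlt : q < p := by
    have h2 := hp.two_le
    have := Nat.le_of_dvd (by omega) hdvd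
    omega
  have hchar := charpoly_orderSuper_s10 hp hq hlt hcard hnab
  obtain ⟨α, β, γ, h1, h2, h3, h4, h5, h6⟩ := exists_roots_s10 (p := (p : ℝ)) (q := (q : ℝ))
    (by exact_mod_cast hp.two_le) (by exact_mod_cast hq.two_le)
  exact ⟨hchar, α, β, γ, h1, h2, h3, h4, h5, by rw [hchar, h6]⟩
end
end

section
/- Let n ≥ 3 be odd and let D_{2n} be the dihedral group of order 2n. Then the Laplacian eigenvalues of the order super commuting graph Δ^o(D_{2n}) are exactly: 0 with multiplicity 1, 1 with multiplicity 1, n with multiplicity n − 2, n + 1 with multiplicity n − 1, and 2n with multiplicity 1; equivalently, χ(L(Δ^o(D_{2n})), x) = x(x − 1)(x − n)^{n−2}(x − n − 1)^{n−1}(x − 2n). -/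
/-!
For odd `n` the graph is explicit: rotations are pairwise adjacent because they commute, reflections
are pairwise adjacent because they all have order `2`, the identity is adjacent to everything, and
no nontrivial rotation is adjacent to a reflection, since rotations have odd order and a rotation
commuting with a reflection squares to `1` (`orderSuper_adj_r_sr`).

Hence, writing `1_r`, `1_s` for the indicator vectors of rotations and reflections and `e` for that
of the identity, `t - L = D + 1_r 1_rᵀ + 1_s (1_s + e)ᵀ + e (1_s - n e)ᵀ`, where `D` is diagonal
with entries `t - n` on rotations and `t - n - 1` on reflections. This is a diagonal matrix plus a
rank-three product `U V`, so for `t ≠ n, n + 1` the identity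
`det (D + U V) = det D * det (1 + V D⁻¹ U)` reduces the determinant to a `3 × 3` one. The two
polynomials then agree at infinitely many points.
-/

open Polynomial

noncomputable section
open scoped Classical

open DihedralGroup in
/-- Rotations and reflections together exhaust the dihedral group. -/
def dihedralSumEquiv (n : ℕ) : ZMod n ⊕ ZMod n ≃ DihedralGroup n where
  toFun := Sum.elim r sr
  invFun g := match g with
    | r i => Sum.inl i
    | sr i => Sum.inr i
  left_inv := by rintro (i | i) <;> rfl
  right_inv := by rintro (i | i) <;> rfl

open DihedralGroup in
lemma sum_dihedral {n : ℕ} [NeZero n] (f : DihedralGroup n → ℝ) :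
    ∑ g, f g = ∑ i, f (r i) + ∑ i, f (sr i) := by
  rw [← (dihedralSumEquiv n).sum_comp, Fintype.sum_sum_type]
  rfl

open DihedralGroup in
lemma prod_dihedral {n : ℕ} [NeZero n] (f : DihedralGroup n → ℝ) :
    ∏ g, f g = (∏ i, f (r i)) * ∏ i, f (sr i) := by
  rw [← (dihedralSumEquiv n).prod_comp, Fintype.prod_sum_type]
  rfl

open DihedralGroup in
lemma orderSuper_adj_r_r {n : ℕ} (i j : ZMod n) :
    (orderSuper (DihedralGroup n)).Adj (r i) (r j) ↔ i ≠ j := by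
  simp only [orderSuper, SimpleGraph.fromRel_adj, ne_eq, r.injEq, and_iff_left_iff_imp]
  intro h
  exact Or.inl (Or.inr ⟨r i, r j, by simpa using h, by simp [add_comm], rfl, rfl⟩)

open DihedralGroup in
lemma orderSuper_adj_sr_sr {n : ℕ} (i j : ZMod n) :
    (orderSuper (DihedralGroup n)).Adj (sr i) (sr j) ↔ i ≠ j := by
  simp [orderSuper, SimpleGraph.fromRel_adj]

open DihedralGroup in
lemma orderOf_r_ne_two {n : ℕ} (hodd : Odd n) (i : ZMod n) :
    orderOf (r i : DihedralGroup n) ≠ 2 := by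
  intro h
  have h1 : orderOf (r i : DihedralGroup n) ∣ n :=
    orderOf_dvd_of_pow_eq_one (by rw [r_pow]; simp)
  rw [h] at h1
  exact (Nat.not_even_iff_odd.2 hodd) (even_iff_two_dvd.2 h1)

open DihedralGroup in
/-- An element with the order of a nontrivial rotation never commutes with one with the order of a
reflection: the former is a nontrivial rotation and the latter a reflection, and commuting would
force the rotation, which has odd order, to square to `1`. -/
lemma not_commute_of_orders {n : ℕ} (hodd : Odd n) {i j : ZMod n} (hi : i ≠ 0)
    {x y : DihedralGroup n} (hxy : x * y = y * x) (hx : orderOf x = orderOf (r i))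
    (hy : orderOf y = orderOf (sr j)) : False := by
  rw [orderOf_sr] at hy
  rcases x with k | k
  · rcases y with l | l
    · exact orderOf_r_ne_two hodd l hy
    · rw [r_mul_sr, sr_mul_r] at hxy
      have h2 : (r k : DihedralGroup n) ^ 2 = 1 := by
        rw [r_pow, one_def]
        congr 1
        have := sr.inj hxy
        push_cast
        linear_combination -this
      have h3 : orderOf (r k : DihedralGroup n) ∣ 2 := orderOf_dvd_of_pow_eq_one h2
      rcases (Nat.dvd_prime Nat.prime_two).1 h3 with h | h
      · rw [hx, orderOf_eq_one_iff, one_def] at h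
        exact hi (r.inj h)
      · exact orderOf_r_ne_two hodd k h
  · rw [orderOf_sr] at hx
    exact orderOf_r_ne_two hodd i hx.symm

open DihedralGroup in
lemma orderSuper_adj_r_sr {n : ℕ} (hodd : Odd n) (i j : ZMod n) :
    (orderSuper (DihedralGroup n)).Adj (r i) (sr j) ↔ i = 0 := by
  simp only [orderSuper, SimpleGraph.fromRel_adj]
  constructor
  · rintro ⟨-, (h | ⟨x, y, -, hxy, hx, hy⟩) | (h | ⟨y, x, -, hxy, hy, hx⟩)⟩ <;> by_contra hi
    · exact orderOf_r_ne_two hodd i (h.trans (orderOf_sr j))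
    · exact not_commute_of_orders hodd hi hxy hx hy
    · exact orderOf_r_ne_two hodd i (h.symm.trans (orderOf_sr j))
    · exact not_commute_of_orders hodd hi hxy.symm hx hy
  · rintro rfl
    exact ⟨nofun, Or.inl (Or.inr ⟨r 0, sr j, nofun, by simp, rfl, rfl⟩)⟩

lemma orderSuper_adj_sr_r {n : ℕ} (hodd : Odd n) (i j : ZMod n) :
    (orderSuper (DihedralGroup n)).Adj (.sr j) (.r i) ↔ i = 0 := by
  rw [SimpleGraph.adj_comm, orderSuper_adj_r_sr hodd]

/-- The diagonal part `D` of `t - L`. -/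
def diagPart {n : ℕ} (t : ℝ) : DihedralGroup n → ℝ
  | .r _ => t - n
  | .sr _ => t - n - 1

/-- The left factor of the rank-three part of `t - L`, with columns `1_r`, `1_s`, `e`. -/
def leftFactor (n : ℕ) : Matrix (DihedralGroup n) (Fin 3) ℝ
  | .r i => ![1, 0, if i = 0 then 1 else 0]
  | .sr _ => ![0, 1, 0]

/-- The right factor of the rank-three part of `t - L`, with rows `1_r`, `1_s + e`, `1_s - n e`. -/
def rightFactor (n : ℕ) : Matrix (Fin 3) (DihedralGroup n) ℝ
  | a, .r i => ![1, if i = 0 then 1 else 0, if i = 0 then -(n : ℝ) else 0] a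
  | a, .sr _ => ![0, 1, 1] a

lemma card_filter_adj {n : ℕ} [NeZero n] (v : DihedralGroup n) :
    ((Finset.univ.filter fun u => (orderSuper (DihedralGroup n)).Adj v u).card : ℝ) =
      ∑ i, (if (orderSuper (DihedralGroup n)).Adj v (.r i) then (1 : ℝ) else 0) +
        ∑ i, (if (orderSuper (DihedralGroup n)).Adj v (.sr i) then (1 : ℝ) else 0) := by
  rw [Finset.card_filter, Nat.cast_sum, sum_dihedral]
  simp

lemma sum_ite_ne {n : ℕ} [NeZero n] (i : ZMod n) :
    ∑ j : ZMod n, (if i ≠ j then (1 : ℝ) else 0) = n - 1 := by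
  have h : ∀ j : ZMod n, (if i ≠ j then (1 : ℝ) else 0) = 1 - if i = j then 1 else 0 := by
    intro j
    by_cases h : i = j <;> simp [h]
  simp [h, Finset.sum_sub_distrib, ZMod.card]

lemma scalar_sub_lapMat {n : ℕ} [NeZero n] (hodd : Odd n) (t : ℝ) :
    Matrix.scalar (DihedralGroup n) t - lapMat (orderSuper (DihedralGroup n)) =
      Matrix.diagonal (diagPart t) + leftFactor n * rightFactor n := by
  ext (i | i) (j | j)
  · simp only [lapMat, adjMat, Matrix.sub_apply, Matrix.add_apply, Matrix.scalar_apply,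
      Matrix.diagonal_apply, card_filter_adj, orderSuper_adj_r_r, orderSuper_adj_r_sr hodd,
      sum_ite_ne, Matrix.mul_apply, Fin.sum_univ_three, leftFactor, rightFactor, diagPart, DihedralGroup.r.injEq]
    by_cases hij : i = j
    · subst hij
      by_cases hi : i = 0 <;> simp [hi, ZMod.card] <;> ring
    · by_cases hi : i = 0
      · have hj : j ≠ 0 := fun h => hij (hi.trans h.symm)
        simp [hi, hj, Ne.symm hj]
      · simp [hij, hi]
  · simp only [lapMat, adjMat, Matrix.sub_apply, Matrix.add_apply, Matrix.scalar_apply,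
      Matrix.diagonal_apply, orderSuper_adj_r_sr hodd,
      Matrix.mul_apply, Fin.sum_univ_three, leftFactor, rightFactor]
    by_cases hi : i = 0 <;> simp [hi, -DihedralGroup.r_zero]
  · simp only [lapMat, adjMat, Matrix.sub_apply, Matrix.add_apply, Matrix.scalar_apply,
      Matrix.diagonal_apply, orderSuper_adj_sr_r hodd,
      Matrix.mul_apply, Fin.sum_univ_three, leftFactor, rightFactor]
    by_cases hj : j = 0 <;> simp [hj, -DihedralGroup.r_zero]
  · simp only [lapMat, adjMat, Matrix.sub_apply, Matrix.add_apply, Matrix.scalar_apply,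
      Matrix.diagonal_apply, card_filter_adj, orderSuper_adj_sr_sr, orderSuper_adj_sr_r hodd,
      sum_ite_ne, Matrix.mul_apply, Fin.sum_univ_three, leftFactor, rightFactor, diagPart, DihedralGroup.sr.injEq]
    by_cases hij : i = j
    · simp [hij]
    · simp [hij]

lemma det_diagonal_add_mul {V : Type*} [Fintype V] [DecidableEq V] {m : ℕ} (d : V → ℝ)
    (hd : ∀ v, d v ≠ 0) (U : Matrix V (Fin m) ℝ) (W : Matrix (Fin m) V ℝ) :
    (Matrix.diagonal d + U * W).det =
      (∏ v, d v) * (1 + W * (Matrix.diagonal (fun v => (d v)⁻¹) * U)).det := by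
  have h : Matrix.diagonal d + U * W =
      Matrix.diagonal d * (1 + Matrix.diagonal (fun v => (d v)⁻¹) * U * W) := by
    rw [mul_add, mul_one, ← Matrix.mul_assoc, ← Matrix.mul_assoc, Matrix.diagonal_mul_diagonal]
    simp [hd]
  rw [h, Matrix.det_mul, Matrix.det_diagonal, Matrix.det_one_add_mul_comm]

/-- The `3 × 3` matrix `V D⁻¹ U`. -/
lemma rightFactor_mul_leftFactor {n : ℕ} [NeZero n] (t : ℝ) :
    rightFactor n *
        (Matrix.diagonal (fun v : DihedralGroup n => (diagPart t v)⁻¹) * leftFactor n) =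
      !![n / (t - n), 0, 1 / (t - n);
         1 / (t - n), n / (t - n - 1), 1 / (t - n);
         -n / (t - n), n / (t - n - 1), -n / (t - n)] := by
  ext a b
  rw [Matrix.mul_apply, sum_dihedral]
  simp only [Matrix.diagonal_mul, leftFactor, rightFactor, diagPart]
  fin_cases a <;> fin_cases b <;> simp [ZMod.card, div_eq_mul_inv]

/-- Laplacian spectrum of the order super commuting graph of the dihedral group `D_{2n}`
for odd `n ≥ 3`: the Laplacian eigenvalues are exactly `0, 1, n, n+1, 2n` with
multiplicities `1, 1, n−2, n−1, 1`, i.e.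
`χ(L(Δ^o(D_{2n})), x) = x (x−1) (x−n)^{n−2} (x−n−1)^{n−1} (x−2n)`. -/
theorem stmt_11 (n : ℕ) [NeZero n] (hn : 3 ≤ n) (hodd : Odd n) :
    (lapMat (orderSuper (DihedralGroup n))).charpoly =
      X * (X - 1) * (X - C (n : ℝ)) ^ (n - 2) * (X - C ((n : ℝ) + 1)) ^ (n - 1) *
        (X - C (2 * (n : ℝ))) := by
  apply Polynomial.eq_of_infinite_eval_eq
  refine Set.Infinite.mono ?_ (Set.Ioi_infinite ((n : ℝ) + 1))
  intro t ht
  have ht' : (n : ℝ) + 1 < t := ht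
  have ha : t - n ≠ 0 := by linarith
  have hb : t - n - 1 ≠ 0 := by linarith
  rw [Set.mem_ofPred_eq, Matrix.eval_charpoly, scalar_sub_lapMat hodd, det_diagonal_add_mul,
    rightFactor_mul_leftFactor, prod_dihedral]
  · obtain ⟨m, rfl⟩ : ∃ m, n = m + 2 := ⟨n - 2, by omega⟩
    simp only [diagPart, Finset.prod_const, Finset.card_univ, ZMod.card, Matrix.det_fin_three]
    simp
    push_cast at ha hb
    field_simp
    ring
  · rintro (i | i)
    · exact ha
    · exact hb
end
end
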